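/- Let S and A be nonempty finite types, P : S → A → PMF S a transition kernel, ρ0 a probability distribution on S, and γ ∈ [0,1). Let π and π' be policies with π(a|s) > 0 for all s, a, let σ ≥ 0, let R_e : S × A → ℝ be a reward function, g : S × A → ℝ any function and δ ∈ ℝ, and set R_i(s,a) = min{g(s,a) − δ, 0} and R(s,a) = R_e(s,a) + σ R_i(s,a). For any function f : S → ℝ define δ_f(s,a,s') = R(s,a) + γ f(s') − f(s), ε_f^{π'} = max_s |Σ_a π'(a|s) Σ_{s'} P(s'|s,a) δ_f(s,a,s')|, and T_{π,f}(π') = Σ_s d^π(s) Σ_a π(a|s) Σ_{s'} P(s'|s,a) (π'(a|s)/π(a|s) − 1) δ_f(s,a,s'). Then J_R(π') − J_R(π) ≤ T_{π,f}(π')/(1−γ) + (2γ ε_f^{π'}/(1−γ)²) · Σ_s d^π(s) D_TV(π'‖π)[s]. -/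

import Mathlib

open scoped BigOperators

section MDPdefs

variable {S A : Type*} [Fintype S] [Fintype A]

/-- The state-marginal distribution at time `t` under policy `π`:
`ρ_0 = ρ0` and `ρ_{t+1}(s') = ∑_s ∑_a ρ_t(s) π(a|s) P(s'|s,a)`. -/
noncomputable def stateMarginal (P : S → A → PMF S) (ρ0 : PMF S) (π : S → PMF A) :
    ℕ → S → ℝ
  | 0, s => (ρ0 s).toReal
  | t + 1, s' => ∑ s : S, ∑ a : A,
      stateMarginal P ρ0 π t s * (π s a).toReal * (P s a s').toReal

/-- The discounted state visitation distribution `d^π(s) = (1-γ) ∑_t γ^t ρ_t^π(s)`. -/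
noncomputable def dVisit (P : S → A → PMF S) (ρ0 : PMF S) (γ : ℝ) (π : S → PMF A)
    (s : S) : ℝ :=
  (1 - γ) * ∑' t : ℕ, γ ^ t * stateMarginal P ρ0 π t s

/-- The discounted return `J_R(π) = ∑_t γ^t ∑_s ∑_a ρ_t^π(s) π(a|s) R(s,a)`. -/
noncomputable def Jret (P : S → A → PMF S) (ρ0 : PMF S) (γ : ℝ) (π : S → PMF A)
    (R : S → A → ℝ) : ℝ :=
  ∑' t : ℕ, γ ^ t * ∑ s : S, ∑ a : A,
      stateMarginal P ρ0 π t s * (π s a).toReal * R s a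

/-- Total variational divergence between the action distributions of two policies at `s`. -/
noncomputable def dTV (π' π : S → PMF A) (s : S) : ℝ :=
  (1 / 2) * ∑ a : A, |(π' s a).toReal - (π s a).toReal|

/-- Value function of `π` with reward `R`: expected discounted return started at `s`. -/
noncomputable def Vval (P : S → A → PMF S) (γ : ℝ) (π : S → PMF A) (R : S → A → ℝ)
    (s : S) : ℝ :=
  Jret P (PMF.pure s) γ π R

/-- State-action value function `Q^π_R(s,a) = R(s,a) + γ ∑_{s'} P(s'|s,a) V^π_R(s')`. -/
noncomputable def Qval (P : S → A → PMF S) (γ : ℝ) (π : S → PMF A) (R : S → A → ℝ)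
    (s : S) (a : A) : ℝ :=
  R s a + γ * ∑ s' : S, (P s a s').toReal * Vval P γ π R s'

/-- Advantage function `A^π_R(s,a) = Q^π_R(s,a) - V^π_R(s)`. -/
noncomputable def Aadv (P : S → A → PMF S) (γ : ℝ) (π : S → PMF A) (R : S → A → ℝ)
    (s : S) (a : A) : ℝ :=
  Qval P γ π R s a - Vval P γ π R s

/-- Kullback–Leibler divergence between the action distributions at state `s`. -/
noncomputable def dKL (π' π : S → PMF A) (s : S) : ℝ :=
  ∑ a : A, (π' s a).toReal * Real.log ((π' s a).toReal / (π s a).toReal)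

end MDPdefs

/-!
The discounted visitation distribution `d^π` is characterised by a flow equation: testing it
against `f : S → ℝ`, `⟨d^π, f⟩ = (1 - γ) ⟨ρ0, f⟩ + γ ⟨d^π, E_π f(s')⟩`. Adding this identity to
`(1 - γ) J_R(π) = ⟨d^π, E_π R⟩` shows that, up to the policy-independent constant `⟨ρ0, f⟩`, the
return is the `d^π`-average of the expected temporal-difference error. For two policies this gives
`(1 - γ) (J_R(π') - J_R(π)) = ⟨d^π, E_π' δ_f - E_π δ_f⟩ + ⟨d^π' - d^π, E_π' δ_f⟩`, where the first
term is the importance-weighted surrogate `T_{π,f}(π')` and the second is at most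
`ε_f ‖d^π' - d^π‖₁`. Testing the two flow equations against the sign of `d^π' - d^π` bounds that
norm: `(1 - γ) ‖d^π' - d^π‖₁ ≤ 2 γ ⟨d^π, D_TV(π' ‖ π)⟩`.
-/

section FiniteExpectation

variable {α : Type*} [Fintype α]

lemma pmf_sum_toReal (p : PMF α) : ∑ x, (p x).toReal = 1 := by
  rw [← ENNReal.toReal_sum fun x _ => p.apply_ne_top x, ← tsum_fintype (L := .unconditional α),
    p.tsum_coe, ENNReal.toReal_one]

lemma abs_sum_mul_le_sum_abs_mul (w : α → ℝ) {h : α → ℝ} {c : ℝ} (hc : ∀ x, |h x| ≤ c) :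
    |∑ x, w x * h x| ≤ (∑ x, |w x|) * c := by
  rw [Finset.sum_mul]
  refine (Finset.abs_sum_le_sum_abs _ _).trans (Finset.sum_le_sum fun x _ => ?_)
  rw [abs_mul]
  exact mul_le_mul_of_nonneg_left (hc x) (abs_nonneg _)

lemma abs_pmf_sum_mul_le (p : PMF α) {h : α → ℝ} {c : ℝ} (hc : ∀ x, |h x| ≤ c) :
    |∑ x, (p x).toReal * h x| ≤ c := by
  simpa only [ENNReal.abs_toReal, pmf_sum_toReal, one_mul] using
    abs_sum_mul_le_sum_abs_mul (fun x => (p x).toReal) hc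

end FiniteExpectation

section TransitionExpectation

/-- The temporal-difference error `δ_f(s,a,s') = R(s,a) + γ f(s') - f(s)` of `f`, seen as an
approximate value function for the reward `R`. -/
def tdError {S A : Type*} (γ : ℝ) (R : S → A → ℝ) (f : S → ℝ) (s : S) (a : A) (s' : S) : ℝ :=
  R s a + γ * f s' - f s

variable {S A : Type*} [Fintype S] [Fintype A]

/-- The expectation `E[h(s,a,s')]` over one step of the process from the state `s`, with
`a ∼ π(·|s)` and `s' ∼ P(·|s,a)`. -/
noncomputable def transitionExp (P : S → A → PMF S) (π : S → PMF A) (h : S → A → S → ℝ)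
    (s : S) : ℝ :=
  ∑ a, (π s a).toReal * ∑ s', (P s a s').toReal * h s a s'

variable (P : S → A → PMF S) (π π' : S → PMF A)

lemma transitionExp_action (r : S → A → ℝ) (s : S) :
    transitionExp P π (fun s a _ => r s a) s = ∑ a, (π s a).toReal * r s a := by
  simp only [transitionExp, ← Finset.sum_mul, pmf_sum_toReal, one_mul]

lemma transitionExp_state (f : S → ℝ) (s : S) :
    transitionExp P π (fun s _ _ => f s) s = f s := by
  rw [transitionExp_action, ← Finset.sum_mul, pmf_sum_toReal, one_mul]

lemma transitionExp_tdError (γ : ℝ) (R : S → A → ℝ) (f : S → ℝ) (s : S) :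
    transitionExp P π (tdError γ R f) s =
      ∑ a, (π s a).toReal * R s a + γ * transitionExp P π (fun _ _ s' => f s') s - f s := by
  conv_rhs => rw [← transitionExp_action P π R s, ← transitionExp_state P π f s]
  simp only [transitionExp, tdError, mul_add, mul_sub, Finset.sum_add_distrib,
    Finset.sum_sub_distrib, Finset.mul_sum, mul_left_comm γ]

lemma abs_transitionExp_le {h : S → A → S → ℝ} {s : S} {c : ℝ} (hc : ∀ a s', |h s a s'| ≤ c) :
    |transitionExp P π h s| ≤ c :=
  abs_pmf_sum_mul_le (π s) fun a => abs_pmf_sum_mul_le (P s a) (hc a)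

lemma abs_transitionExp_sub_le {h : S → A → S → ℝ} {s : S} {c : ℝ}
    (hc : ∀ a s', |h s a s'| ≤ c) :
    |transitionExp P π' h s - transitionExp P π h s| ≤ 2 * dTV π' π s * c := by
  have h_dTV : 2 * dTV π' π s = ∑ a, |(π' s a).toReal - (π s a).toReal| := by
    rw [dTV]; ring
  simp only [transitionExp, ← Finset.sum_sub_distrib, ← sub_mul, h_dTV]
  exact abs_sum_mul_le_sum_abs_mul _ fun a => abs_pmf_sum_mul_le (P s a) (hc a)

lemma transitionExp_importance_weight {s : S} (hac : ∀ a, π s a = 0 → π' s a = 0)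
    (h : S → A → S → ℝ) :
    transitionExp P π
        (fun s a s' => ((π' s a).toReal / (π s a).toReal - 1) * h s a s') s =
      transitionExp P π' h s - transitionExp P π h s := by
  have h_weight : ∀ a, (π s a).toReal * ((π' s a).toReal / (π s a).toReal - 1) =
      (π' s a).toReal - (π s a).toReal := fun a => by
    rw [mul_sub_one, mul_div_cancel_of_imp']
    intro hπ
    have hπ0 := ((ENNReal.toReal_eq_zero_iff _).1 hπ).resolve_right ((π s).apply_ne_top a)
    rw [hac a hπ0, ENNReal.toReal_zero]
  simp only [transitionExp, ← Finset.sum_sub_distrib, ← sub_mul, ← h_weight,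
    mul_left_comm _ (_ - _), ← Finset.mul_sum, mul_assoc]

end TransitionExpectation

section StateMarginal

variable {S A : Type*} [Fintype S] [Fintype A]
variable (P : S → A → PMF S) (ρ0 : PMF S) (π : S → PMF A)

lemma stateMarginal_nonneg (t : ℕ) (s : S) : 0 ≤ stateMarginal P ρ0 π t s := by
  induction t generalizing s with
  | zero => exact ENNReal.toReal_nonneg
  | succ t ih =>
    exact Finset.sum_nonneg fun x _ => Finset.sum_nonneg fun a _ =>
      mul_nonneg (mul_nonneg (ih x) ENNReal.toReal_nonneg) ENNReal.toReal_nonneg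

lemma sum_stateMarginal_succ_mul (t : ℕ) (f : S → ℝ) :
    ∑ s, stateMarginal P ρ0 π (t + 1) s * f s =
      ∑ s, stateMarginal P ρ0 π t s * transitionExp P π (fun _ _ s' => f s') s := by
  simp only [stateMarginal, transitionExp, Finset.sum_mul, Finset.mul_sum, mul_assoc]
  rw [Finset.sum_comm]
  exact Finset.sum_congr rfl fun s _ => Finset.sum_comm

lemma sum_stateMarginal (t : ℕ) : ∑ s, stateMarginal P ρ0 π t s = 1 := by
  induction t with
  | zero => exact pmf_sum_toReal ρ0
  | succ t ih =>
    have h_step := sum_stateMarginal_succ_mul P ρ0 π t fun _ => 1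
    simpa only [transitionExp_state P π fun _ => 1, mul_one, ih] using h_step

lemma stateMarginal_le_one (t : ℕ) (s : S) : stateMarginal P ρ0 π t s ≤ 1 := by
  rw [← sum_stateMarginal P ρ0 π t]
  exact Finset.single_le_sum (fun x _ => stateMarginal_nonneg P ρ0 π t x) (Finset.mem_univ s)

end StateMarginal

section DiscountedVisitation

variable {S A : Type*} [Fintype S] [Fintype A]
variable (P : S → A → PMF S) (ρ0 : PMF S) {γ : ℝ} (π π' : S → PMF A)

lemma summable_discounted_stateMarginal (hγ0 : 0 ≤ γ) (hγ1 : γ < 1) (s : S) :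
    Summable fun t : ℕ => γ ^ t * stateMarginal P ρ0 π t s :=
  .of_nonneg_of_le
    (fun t => mul_nonneg (pow_nonneg hγ0 t) (stateMarginal_nonneg P ρ0 π t s))
    (fun t => mul_le_of_le_one_right (pow_nonneg hγ0 t) (stateMarginal_le_one P ρ0 π t s))
    (summable_geometric_of_lt_one hγ0 hγ1)

lemma dVisit_nonneg (hγ0 : 0 ≤ γ) (hγ1 : γ < 1) (s : S) : 0 ≤ dVisit P ρ0 γ π s :=
  mul_nonneg (sub_nonneg.2 hγ1.le) <| tsum_nonneg fun t =>
    mul_nonneg (pow_nonneg hγ0 t) (stateMarginal_nonneg P ρ0 π t s)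

lemma hasSum_discounted_sum_stateMarginal_mul (hγ0 : 0 ≤ γ) (hγ1 : γ < 1) (f : S → ℝ) :
    HasSum (fun t : ℕ => (1 - γ) * (γ ^ t * ∑ s, stateMarginal P ρ0 π t s * f s))
      (∑ s, dVisit P ρ0 γ π s * f s) := by
  have h_state := hasSum_sum fun s (_ : s ∈ Finset.univ) =>
    ((summable_discounted_stateMarginal P ρ0 π hγ0 hγ1 s).hasSum.mul_left (1 - γ)).mul_right (f s)
  simpa only [dVisit, Finset.mul_sum, mul_assoc] using h_state

lemma one_sub_mul_Jret (hγ0 : 0 ≤ γ) (hγ1 : γ < 1) (R : S → A → ℝ) :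
    (1 - γ) * Jret P ρ0 γ π R =
      ∑ s, dVisit P ρ0 γ π s * ∑ a, (π s a).toReal * R s a := by
  rw [← (hasSum_discounted_sum_stateMarginal_mul P ρ0 π hγ0 hγ1 _).tsum_eq, tsum_mul_left]
  simp only [Jret, Finset.mul_sum, mul_assoc]

lemma sum_dVisit_mul_eq_initial_add_next (hγ0 : 0 ≤ γ) (hγ1 : γ < 1) (f : S → ℝ) :
    ∑ s, dVisit P ρ0 γ π s * f s =
      (1 - γ) * ∑ s, (ρ0 s).toReal * f s +
        γ * ∑ s, dVisit P ρ0 γ π s * transitionExp P π (fun _ _ s' => f s') s := by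
  have h_sum := hasSum_discounted_sum_stateMarginal_mul P ρ0 π hγ0 hγ1 f
  have h_next := hasSum_discounted_sum_stateMarginal_mul P ρ0 π hγ0 hγ1
    (transitionExp P π fun _ _ s' => f s')
  rw [← h_sum.tsum_eq, h_sum.summable.tsum_eq_zero_add, ← h_next.tsum_eq, ← tsum_mul_left]
  congr 1
  · simp only [stateMarginal, pow_zero, one_mul]
  · refine tsum_congr fun t => ?_
    rw [sum_stateMarginal_succ_mul]
    ring

lemma one_sub_mul_Jret_eq_tdError (hγ0 : 0 ≤ γ) (hγ1 : γ < 1) (R : S → A → ℝ) (f : S → ℝ) :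
    (1 - γ) * Jret P ρ0 γ π R =
      (1 - γ) * ∑ s, (ρ0 s).toReal * f s +
        ∑ s, dVisit P ρ0 γ π s * transitionExp P π (tdError γ R f) s := by
  have h_flow := sum_dVisit_mul_eq_initial_add_next P ρ0 π hγ0 hγ1 f
  simp only [transitionExp_tdError, mul_sub, mul_add (dVisit _ _ _ _ _), mul_left_comm _ γ,
    Finset.sum_sub_distrib, Finset.sum_add_distrib, ← Finset.mul_sum _ _ γ]
  rw [one_sub_mul_Jret P ρ0 π hγ0 hγ1]
  linarith

lemma one_sub_mul_Jret_sub (hγ0 : 0 ≤ γ) (hγ1 : γ < 1) (R : S → A → ℝ) (f : S → ℝ) :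
    (1 - γ) * (Jret P ρ0 γ π' R - Jret P ρ0 γ π R) =
      ∑ s, dVisit P ρ0 γ π s *
          (transitionExp P π' (tdError γ R f) s - transitionExp P π (tdError γ R f) s) +
        ∑ s, (dVisit P ρ0 γ π' s - dVisit P ρ0 γ π s) * transitionExp P π' (tdError γ R f) s := by
  simp only [mul_sub, sub_mul, Finset.sum_sub_distrib,
    one_sub_mul_Jret_eq_tdError P ρ0 _ hγ0 hγ1 R f]
  ring

lemma one_sub_mul_sum_abs_dVisit_sub_le (hγ0 : 0 ≤ γ) (hγ1 : γ < 1) :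
    (1 - γ) * ∑ s, |dVisit P ρ0 γ π' s - dVisit P ρ0 γ π s| ≤
      2 * γ * ∑ s, dVisit P ρ0 γ π s * dTV π' π s := by
  set d := dVisit P ρ0 γ π
  set d' := dVisit P ρ0 γ π'
  let f : S → ℝ := fun s => SignType.sign (d' s - d s)
  let next : (S → PMF A) → S → ℝ := fun p => transitionExp P p fun _ _ s' => f s'
  have hf : ∀ s, |f s| ≤ 1 := fun s => by
    rcases lt_trichotomy (d' s - d s) 0 with h | h | h <;> simp [f, h]
  have h_abs : ∑ s, |d' s - d s| = ∑ s, d' s * f s - ∑ s, d s * f s := by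
    simp only [← Finset.sum_sub_distrib, ← sub_mul, f, self_mul_sign]
  have h_flow : ∑ s, |d' s - d s| =
      γ * (∑ s, (d' s - d s) * next π' s + ∑ s, d s * (next π' s - next π s)) := by
    rw [h_abs, sum_dVisit_mul_eq_initial_add_next P ρ0 π' hγ0 hγ1 f,
      sum_dVisit_mul_eq_initial_add_next P ρ0 π hγ0 hγ1 f]
    simp only [sub_mul, mul_sub, Finset.sum_sub_distrib, next, d, d']
    ring
  have h_state : ∑ s, (d' s - d s) * next π' s ≤ ∑ s, |d' s - d s| := by
    have h_next : ∀ s, |next π' s| ≤ 1 := fun s => abs_transitionExp_le P π' fun _ => hf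
    simpa only [mul_one] using (le_abs_self _).trans (abs_sum_mul_le_sum_abs_mul _ h_next)
  have h_action : ∑ s, d s * (next π' s - next π s) ≤ 2 * ∑ s, d s * dTV π' π s := by
    have h_next : ∀ s, |next π' s - next π s| ≤ 2 * dTV π' π s * 1 := fun s =>
      abs_transitionExp_sub_le P π π' fun _ => hf
    simp only [Finset.mul_sum, mul_left_comm (2 : ℝ), mul_one] at h_next ⊢
    exact Finset.sum_le_sum fun s _ => mul_le_mul_of_nonneg_left
      (le_of_abs_le (h_next s)) (dVisit_nonneg P ρ0 π hγ0 hγ1 s)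
  linarith [mul_le_mul_of_nonneg_left (add_le_add h_state h_action) hγ0]

end DiscountedVisitation

theorem tace_performance_upper_bound_general
    {S A : Type*} [Fintype S] [Fintype A]
    (P : S → A → PMF S) (ρ0 : PMF S) {γ : ℝ} (hγ0 : 0 ≤ γ) (hγ1 : γ < 1)
    (π π' : S → PMF A) (hac : ∀ s a, π s a = 0 → π' s a = 0) (R : S → A → ℝ) (f : S → ℝ) :
    |Jret P ρ0 γ π' R - Jret P ρ0 γ π R -
        (∑ s, dVisit P ρ0 γ π s * transitionExp P π (fun s a s' =>
          ((π' s a).toReal / (π s a).toReal - 1) * tdError γ R f s a s') s) / (1 - γ)| ≤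
      2 * γ * (⨆ s, |transitionExp P π' (tdError γ R f) s|) / (1 - γ) ^ 2 *
        ∑ s, dVisit P ρ0 γ π s * dTV π' π s := by
  set u := transitionExp P π' (tdError γ R f)
  set ε := ⨆ s, |u s|
  have hγ : 0 < 1 - γ := sub_pos.2 hγ1
  have hu : ∀ s, |u s| ≤ ε := le_ciSup (Set.finite_range fun s => |u s|).bddAbove
  have hε : 0 ≤ ε := Real.iSup_nonneg fun s => abs_nonneg (u s)
  have h_gap : |∑ s, (dVisit P ρ0 γ π' s - dVisit P ρ0 γ π s) * u s| ≤
      2 * γ * (∑ s, dVisit P ρ0 γ π s * dTV π' π s) / (1 - γ) * ε :=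
    (abs_sum_mul_le_sum_abs_mul _ hu).trans <| mul_le_mul_of_nonneg_right
      ((le_div_iff₀' hγ).2 <| one_sub_mul_sum_abs_dVisit_sub_le P ρ0 π π' hγ0 hγ1) hε
  simp only [fun s => transitionExp_importance_weight P π π' (hac s)]
  rw [sub_div' hγ.ne', mul_comm _ (1 - γ), one_sub_mul_Jret_sub P ρ0 π π' hγ0 hγ1 R f,
    add_sub_cancel_left, abs_div, abs_of_pos hγ, div_le_iff₀ hγ]
  refine h_gap.trans_eq ?_
  field_simp

/-- Theorem 1 (upper bound): performance bound of the trajectory-constrained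
exploration strategy. -/
theorem tace_performance_upper_bound
    {S A : Type*} [Fintype S] [Fintype A] [Nonempty S] [Nonempty A]
    (P : S → A → PMF S) (ρ0 : PMF S) (γ : ℝ) (hγ0 : 0 ≤ γ) (hγ1 : γ < 1)
    (π π' : S → PMF A) (hπpos : ∀ s a, 0 < (π s a).toReal)
    (σ : ℝ) (hσ : 0 ≤ σ) (Re g : S → A → ℝ) (δ : ℝ) (f : S → ℝ) :
    let Ri : S → A → ℝ := fun s a => min (g s a - δ) 0
    let R : S → A → ℝ := fun s a => Re s a + σ * Ri s a
    let δf : S → A → S → ℝ := fun s a s' => R s a + γ * f s' - f s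
    let εf : ℝ :=
      ⨆ s : S, |∑ a : A, (π' s a).toReal * ∑ s' : S, (P s a s').toReal * δf s a s'|
    let Tf : ℝ := ∑ s : S, dVisit P ρ0 γ π s * ∑ a : A, (π s a).toReal *
        ∑ s' : S, (P s a s').toReal *
          (((π' s a).toReal / (π s a).toReal - 1) * δf s a s')
    Jret P ρ0 γ π' R - Jret P ρ0 γ π R ≤
      Tf / (1 - γ) +
        (2 * γ * εf / (1 - γ) ^ 2) * ∑ s : S, dVisit P ρ0 γ π s * dTV π' π s := by
  intro Ri R δf εf Tf
  exact sub_le_iff_le_add'.1 <| le_of_abs_le <| tace_performance_upper_bound_general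
    P ρ0 hγ0 hγ1 π π' (fun s a h => absurd (hπpos s a) (by simp [h])) R f
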